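/- For every coupling λ ≥ 0, all indices k, l ∈ {1,…,N} and all source matrices J, K ∈ M_N(ℂ), the LSZ partition function satisfies the Ward identity Σ_{n=1}^N [ (E_k − E_l)·∂²Z/∂J_{ln}∂K_{nk}(J,K) + N·K_{nl}·∂Z/∂K_{nk}(J,K) − N·J_{kn}·∂Z/∂J_{ln}(J,K) ] = 0. (The identity is independent of the second external field Ẽ and of λ; it follows from the invariance of the Lebesgue measure and of the action under the unitary transformation Φ ↦ UΦ, Φ* ↦ Φ*U*.) -/

import Mathlib

/-!
Lebesgue measure is invariant under `Φ ↦ exp(tA) Φ` for skew-Hermitian `A`, so the integral of the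
`t`-derivative of the integrand vanishes. The products `Φᴴ Φ` do not change along this flow, hence
only the `E`-part of the action and the sources contribute, and the derivative is `N Tr(A M)`
times the integrand, where `M = E Φ Φᴴ - Φ Φᴴ E + Φ K - J Φᴴ`. Every complex matrix is a complex
linear combination of skew-Hermitian ones, so the expectation of every entry of `M` vanishes.
Since `∂/∂J_{ab}` inserts `N conj Φ_{ab}` and `∂/∂K_{ab}` inserts `N Φ_{ba}`, the `(k, l)` entry
is the Ward identity. Gaussian decay of the integrand, which survives multiplication by
polynomials and by exponentials of linear forms, justifies all integrations and differentiations.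
-/

open MeasureTheory Matrix

/-- The LSZ action `S(Φ) = Σ_{m,n} (E_n + Ẽ_m)|Φ_{nm}|² + (λ/2)·Tr((Φ*Φ)²)`,
viewed as a complex number. -/
noncomputable def lszAction (N : ℕ) (E Et : Fin N → ℝ) (lam : ℝ)
    (Φ : Fin N → Fin N → ℂ) : ℂ :=
  (∑ n, ∑ m, (((E n + Et m : ℝ)) : ℂ) * ((Complex.normSq (Φ n m) : ℝ) : ℂ))
    + ((lam / 2 : ℝ) : ℂ) *
      ((((Matrix.of Φ)ᴴ * Matrix.of Φ) * ((Matrix.of Φ)ᴴ * Matrix.of Φ)).trace)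

/-- The integrand of the LSZ partition function with sources `J`, `K`. -/
noncomputable def lszIntegrand (N : ℕ) (E Et : Fin N → ℝ) (lam : ℝ)
    (J K : Fin N → Fin N → ℂ) (Φ : Fin N → Fin N → ℂ) : ℂ :=
  Complex.exp (-(N : ℂ) * lszAction N E Et lam Φ
    + (N : ℂ) * ((∑ m, ∑ n, J n m * (starRingEnd ℂ) (Φ n m))
      + ∑ m, ∑ n, K m n * Φ n m))

/-- The LSZ partition function `Z(J,K)`. -/
noncomputable def lszZ (N : ℕ) (E Et : Fin N → ℝ) (lam : ℝ)
    (J K : Fin N → Fin N → ℂ) : ℂ :=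
  ∫ Φ : Fin N → Fin N → ℂ, lszIntegrand N E Et lam J K Φ

/-- The elementary matrix with a single `1` at position `(a,b)`. -/
def eMat (N : ℕ) (a b : Fin N) : Fin N → Fin N → ℂ :=
  fun i j => if i = a ∧ j = b then 1 else 0

/-- The holomorphic partial derivative `∂/∂J_{ab}` of a function of `(J,K)`. -/
noncomputable def dJ (N : ℕ) (a b : Fin N)
    (f : (Fin N → Fin N → ℂ) → (Fin N → Fin N → ℂ) → ℂ) :
    (Fin N → Fin N → ℂ) → (Fin N → Fin N → ℂ) → ℂ :=
  fun J K => deriv (fun t : ℂ => f (J + t • eMat N a b) K) 0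

/-- The holomorphic partial derivative `∂/∂K_{ab}` of a function of `(J,K)`. -/
noncomputable def dK (N : ℕ) (a b : Fin N)
    (f : (Fin N → Fin N → ℂ) → (Fin N → Fin N → ℂ) → ℂ) :
    (Fin N → Fin N → ℂ) → (Fin N → Fin N → ℂ) → ℂ :=
  fun J K => deriv (fun t : ℂ => f J (K + t • eMat N a b)) 0

section GaussianDecay

open Asymptotics

variable {E F : Type*} [NormedAddCommGroup E] [NormedAddCommGroup F]

/-- Gaussian decay of a function `f`. The bound is imposed everywhere, not only at infinity, so
that it also bounds `f`. -/
def HasGaussianDecay (f : E → F) : Prop :=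
  ∃ c > 0, f =O[⊤] fun x ↦ Real.exp (-c * ‖x‖ ^ 2)

lemma isBigO_exp_norm_mul_exp_neg_norm_sq {c : ℝ} (hc : 0 < c) (R : ℝ) :
    (fun x : E ↦ Real.exp (R * ‖x‖) * Real.exp (-c * ‖x‖ ^ 2)) =O[⊤]
      fun x ↦ Real.exp (-(c / 2) * ‖x‖ ^ 2) := by
  refine isBigO_top.2 ⟨Real.exp (R ^ 2 / (2 * c)), fun x ↦ ?_⟩
  rw [← Real.exp_add, Real.norm_eq_abs, Real.norm_eq_abs, Real.abs_exp, Real.abs_exp,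
    ← Real.exp_add, Real.exp_le_exp]
  have square : R ^ 2 / (2 * c) + -(c / 2) * ‖x‖ ^ 2 - (R * ‖x‖ + -c * ‖x‖ ^ 2)
      = (c * ‖x‖ - R) ^ 2 / (2 * c) := by field_simp; ring
  have : 0 ≤ (c * ‖x‖ - R) ^ 2 / (2 * c) := by positivity
  linarith

lemma isBigO_one_add_norm_pow_exp (k : ℕ) :
    (fun x : E ↦ (1 + ‖x‖) ^ k) =O[⊤] fun x ↦ Real.exp (k * ‖x‖) := by
  refine isBigO_of_le _ fun x ↦ ?_
  rw [Real.norm_of_nonneg (by positivity), Real.norm_of_nonneg (Real.exp_nonneg _),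
    Real.exp_nat_mul]
  gcongr
  linarith [Real.add_one_le_exp ‖x‖]

lemma exists_isBigO_exp_of_hasTemperateGrowth [NormedSpace ℝ E] [NormedSpace ℝ F] {f : E → F}
    (hf : f.HasTemperateGrowth) : ∃ R, f =O[⊤] fun x ↦ Real.exp (R * ‖x‖) := by
  obtain ⟨k, hk⟩ := hf.isBigO 0
  refine ⟨k, .trans (isBigO_of_le _ fun x ↦ ?_) (hk.trans (isBigO_one_add_norm_pow_exp k))⟩
  rw [norm_iteratedFDeriv_zero]

lemma isBigO_cexp_continuousLinearMap [NormedSpace ℝ E] (L : E →L[ℝ] ℂ) :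
    (fun x ↦ Complex.exp (L x)) =O[⊤] fun x ↦ Real.exp (‖L‖ * ‖x‖) :=
  isBigO_of_le _ fun x ↦ by
    rw [Real.norm_of_nonneg (Real.exp_nonneg _)]
    exact (Complex.norm_exp_le_exp_norm _).trans (Real.exp_le_exp.2 (L.le_opNorm x))

namespace HasGaussianDecay

section Mul

variable {A : Type*} [NormedRing A] {f g : E → A}

lemma mul_of_isBigO_exp {R : ℝ} (hf : f =O[⊤] fun x ↦ Real.exp (R * ‖x‖))
    (hg : HasGaussianDecay g) : HasGaussianDecay fun x ↦ f x * g x := by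
  obtain ⟨c, hc, hg⟩ := hg
  exact ⟨c / 2, half_pos hc, (hf.mul hg).trans (isBigO_exp_norm_mul_exp_neg_norm_sq hc R)⟩

lemma mul_of_hasTemperateGrowth [NormedSpace ℝ E] [NormedSpace ℝ A] (hf : f.HasTemperateGrowth)
    (hg : HasGaussianDecay g) : HasGaussianDecay fun x ↦ f x * g x :=
  have ⟨_, hR⟩ := exists_isBigO_exp_of_hasTemperateGrowth hf
  hg.mul_of_isBigO_exp hR

end Mul

variable {g : E → F}

lemma norm (hg : HasGaussianDecay g) : HasGaussianDecay fun x ↦ ‖g x‖ :=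
  have ⟨c, hc, hg⟩ := hg
  ⟨c, hc, hg.norm_left⟩

lemma exists_norm_le (hg : HasGaussianDecay g) : ∃ C, ∀ x, ‖g x‖ ≤ C := by
  obtain ⟨c, hc, hg⟩ := hg
  obtain ⟨C, hC⟩ := isBigO_top.1 <| hg.trans <|
    isBigO_of_le (g := fun _ ↦ (1 : ℝ)) _ fun x ↦ by
      simp only [norm_one, Real.norm_of_nonneg (Real.exp_nonneg _), Real.exp_le_one_iff, neg_mul,
        neg_nonpos]
      positivity
  exact ⟨C, by simpa using hC⟩

lemma integrable [MeasurableSpace E] [BorelSpace E] [SecondCountableTopology E] {μ : Measure E}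
    [μ.HasTemperateGrowth] (hg : HasGaussianDecay g) (hgm : AEStronglyMeasurable g μ) :
    Integrable g μ := by
  have hpow : (fun x : E ↦ ‖x‖ ^ (0 + μ.integrablePower)) =O[⊤] _ :=
    (isBigO_of_le _ fun x ↦ by
      rw [zero_add, Real.norm_of_nonneg (by positivity), Real.norm_of_nonneg (by positivity)]
      gcongr
      exact le_add_of_nonneg_left zero_le_one).trans
    (isBigO_one_add_norm_pow_exp μ.integrablePower)
  obtain ⟨C₁, h₁⟩ := hg.exists_norm_le
  obtain ⟨C₂, h₂⟩ := (hg.norm.mul_of_isBigO_exp hpow).exists_norm_le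
  have h := integrable_of_le_of_pow_mul_le (k := 0) h₁ (fun x ↦ by simpa using h₂ x) hgm
  exact (integrable_norm_iff hgm).1 (by simpa using h)

lemma hasDerivAt_integral_mul_cexp [NormedSpace ℝ E] [MeasurableSpace E] [BorelSpace E]
    [SecondCountableTopology E] {μ : Measure E} [μ.HasTemperateGrowth] {g : E → ℂ}
    (hg : HasGaussianDecay g) (hgm : AEStronglyMeasurable g μ) (L : E →L[ℝ] ℂ) :
    HasDerivAt (fun t : ℂ ↦ ∫ x, g x * Complex.exp (t * L x) ∂μ) (∫ x, L x * g x ∂μ) 0 := by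
  have hbound : Integrable (fun x ↦ Real.exp (2 * ‖L‖ * ‖x‖) * ‖g x‖) μ :=
    (hg.norm.mul_of_isBigO_exp (isBigO_refl _ _)).integrable
      ((by fun_prop : Continuous _).aestronglyMeasurable.mul hgm.norm)
  have key := hasDerivAt_integral_of_dominated_loc_of_deriv_le (μ := μ) (𝕜 := ℂ)
    (F := fun t x ↦ g x * Complex.exp (t * L x))
    (F' := fun t x ↦ L x * (g x * Complex.exp (t * L x))) (x₀ := 0)
    (Metric.ball_mem_nhds 0 one_pos) (.of_forall fun t ↦ hgm.mul
      (by fun_prop : Continuous fun x ↦ Complex.exp (t * L x)).aestronglyMeasurable)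
    (by simpa using hg.integrable hgm)
    (L.continuous.aestronglyMeasurable.mul (by simpa using hgm)) (.of_forall fun x t ht ↦ ?_)
    hbound
    (.of_forall fun x t _ ↦ ?_)
  · simpa using key.2
  · have hL : ‖L x‖ ≤ ‖L‖ * ‖x‖ := L.le_opNorm x
    have ht : ‖t‖ ≤ 1 := (mem_ball_zero_iff.1 ht).le
    calc ‖L x * (g x * Complex.exp (t * L x))‖
        ≤ Real.exp (‖L x‖) * (‖g x‖ * Real.exp (‖t * L x‖)) := by
          rw [norm_mul, norm_mul]
          gcongr
          · linarith [Real.add_one_le_exp ‖L x‖]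
          · exact Complex.norm_exp_le_exp_norm _
      _ ≤ Real.exp (‖L‖ * ‖x‖) * (‖g x‖ * Real.exp (1 * (‖L‖ * ‖x‖))) := by
          rw [norm_mul]
          gcongr
      _ = Real.exp (2 * ‖L‖ * ‖x‖) * ‖g x‖ := by
          rw [mul_left_comm, ← Real.exp_add, mul_comm]
          ring_nf
  · have h := ((hasDerivAt_mul_const (L x)).cexp (x := t)).const_mul (g x)
    exact h.congr_deriv (by ring)

end HasGaussianDecay

end GaussianDecay

section Invariance

lemma integral_eq_zero_of_hasDerivAt_flow {α F : Type*} [TopologicalSpace α]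
    [SecondCountableTopology α] [MeasurableSpace α] [BorelSpace α] [NormedAddCommGroup F]
    [NormedSpace ℝ F] [CompleteSpace F] (φ : Flow ℝ α) {μ : Measure α} [SFinite μ]
    (hφ : ∀ t, MeasurePreserving (φ t) μ μ) {f f' : α → F} (hf : Integrable f μ)
    (hf' : Integrable f' μ) (hderiv : ∀ x, HasDerivAt (fun t ↦ f (φ t x)) (f' x) 0) :
    ∫ x, f' x ∂μ = 0 := by
  have hderiv' (x : α) (t : ℝ) : HasDerivAt (fun s ↦ f (φ s x)) (f' (φ t x)) t := by
    have h := hderiv (φ t x)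
    simp only [← φ.map_add] at h
    rw [← sub_self t] at h
    simpa using h.comp_sub_const t t
  let ν : Measure ℝ := volume.restrict (Set.Ioc 0 1)
  have hskew : MeasurePreserving (fun p : ℝ × α ↦ (p.1, φ p.1 p.2)) (ν.prod μ) (ν.prod μ) :=
    (MeasurePreserving.id ν).skew_product φ.cont'.measurable (.of_forall fun t ↦ (hφ t).map_eq)
  have hint : Integrable (fun p : ℝ × α ↦ f' (φ p.1 p.2)) (ν.prod μ) :=
    hskew.integrable_comp_of_integrable (hf'.comp_snd ν)
  have hinv (g : α → F) (t : ℝ) : ∫ x, g (φ t x) ∂μ = ∫ x, g x ∂μ :=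
    (hφ t).integral_comp (φ.toHomeomorph t).measurableEmbedding g
  calc
    ∫ x, f' x ∂μ = ∫ t : ℝ, ∫ x, f' (φ t x) ∂μ ∂ν := by simp [ν, hinv]
    _ = ∫ x, ∫ t, f' (φ t x) ∂ν ∂μ := integral_integral_swap hint
    _ = ∫ x, (f (φ 1 x) - f (φ 0 x)) ∂μ := by
      refine integral_congr_ae (hint.prod_left_ae.mono fun x hx ↦ ?_)
      simp only [ν]
      rw [← intervalIntegral.integral_of_le zero_le_one]
      exact intervalIntegral.integral_eq_sub_of_hasDerivAt (fun t _ ↦ hderiv' x t)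
        ((intervalIntegrable_iff_integrableOn_Ioc_of_le zero_le_one).2 hx)
    _ = 0 := by
      have hfφ (t : ℝ) : Integrable (fun x ↦ f (φ t x)) μ :=
        (hφ t).integrable_comp_of_integrable hf
      rw [integral_sub (hfφ 1) (hfφ 0), hinv, hinv, sub_self]

lemma measurePreserving_linearMap_of_image_eq {E : Type*} [NormedAddCommGroup E] [NormedSpace ℝ E]
    [MeasurableSpace E] [BorelSpace E] [FiniteDimensional ℝ E] {μ : Measure E} [μ.IsAddHaarMeasure]
    {f : E →ₗ[ℝ] E} {s : Set E} (hs : f '' s = s) (h0 : μ s ≠ 0) (htop : μ s ≠ ⊤) :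
    MeasurePreserving f μ μ := by
  have hdet : |LinearMap.det f| = 1 := by
    have h := Measure.addHaar_image_linearMap μ f s
    rw [hs, eq_comm, ENNReal.mul_eq_right h0 htop] at h
    simpa using h
  refine ⟨f.continuous_of_finiteDimensional.measurable, ?_⟩
  rw [Measure.map_linearMap_addHaar_eq_smul_addHaar μ (fun h ↦ by simp [h] at hdet), abs_inv, hdet]
  simp

end Invariance

section UnitaryRotations

lemma norm_sq_le_sum_norm_sq {ι κ F : Type*} [Fintype ι] [Fintype κ] [SeminormedAddGroup F]
    (Φ : ι → κ → F) : ‖Φ‖ ^ 2 ≤ ∑ i, ∑ j, ‖Φ i j‖ ^ 2 := by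
  rw [← Real.le_sqrt (norm_nonneg Φ) (by positivity)]
  simp only [pi_norm_le_iff_of_nonneg (Real.sqrt_nonneg _)]
  refine fun i j ↦ Real.le_sqrt_of_sq_le ?_
  calc ‖Φ i j‖ ^ 2
      ≤ ∑ j, ‖Φ i j‖ ^ 2 :=
        Finset.single_le_sum (f := fun j ↦ ‖Φ i j‖ ^ 2) (fun _ _ ↦ sq_nonneg _) (Finset.mem_univ j)
    _ ≤ ∑ i, ∑ j, ‖Φ i j‖ ^ 2 :=
        Finset.single_le_sum (f := fun i ↦ ∑ j, ‖Φ i j‖ ^ 2) (fun _ _ ↦ by positivity)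
          (Finset.mem_univ i)

variable {n m : Type*} [Fintype n]

lemma re_trace_conjTranspose_mul_self [Fintype m] (Φ : n → m → ℂ) :
    ((of Φ)ᴴ * of Φ).trace.re = ∑ i, ∑ j, ‖Φ i j‖ ^ 2 := by
  rw [Finset.sum_comm]
  simp [trace, Matrix.mul_apply, Complex.mul_re, ← Complex.normSq_apply, Complex.normSq_eq_norm_sq]

/-- Left multiplication by the matrix `U`, acting on the function space that underlies the
matrices, which is where Lebesgue measure lives. -/
noncomputable def leftMul (U : Matrix n n ℂ) : (n → m → ℂ) →ₗ[ℝ] (n → m → ℂ) :=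
  (ofLinearEquiv ℝ).symm.toLinearMap ∘ₗ mulLeftLinearMap m ℝ U ∘ₗ (ofLinearEquiv ℝ).toLinearMap

lemma of_leftMul (U : Matrix n n ℂ) (Φ : n → m → ℂ) : of (leftMul U Φ) = U * of Φ := rfl

lemma leftMul_mul (U V : Matrix n n ℂ) (Φ : n → m → ℂ) :
    leftMul (U * V) Φ = leftMul U (leftMul V Φ) :=
  of.injective (Matrix.mul_assoc ..)

lemma eq_zero_of_trace_mul_skew_eq_zero {M : Matrix n n ℂ}
    (h : ∀ A : Matrix n n ℂ, Aᴴ = -A → (A * M).trace = 0) : M = 0 := by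
  refine Matrix.ext_iff_trace_mul_left.2 fun B ↦ ?_
  have hskew : ((B - Bᴴ) * M).trace = 0 := h _ (by simp)
  have hherm : ((Complex.I • (B + Bᴴ)) * M).trace = 0 := h _ (by
    simp [← smul_neg, add_comm])
  have hsum : ((B + Bᴴ) * M).trace = 0 := by
    simpa [← smul_add] using hherm
  have key : ((2 : ℂ) • B * M).trace = ((B - Bᴴ) * M).trace + ((B + Bᴴ) * M).trace := by
    rw [← trace_add, ← add_mul, sub_add_add_cancel, ← two_smul ℂ B]
  simpa [hskew, hsum] using key

variable [DecidableEq n]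

lemma leftMul_one (Φ : n → m → ℂ) : leftMul 1 Φ = Φ := of.injective (Matrix.one_mul _)

lemma conjTranspose_leftMul_mul_leftMul {U : Matrix n n ℂ} (hU : U ∈ unitary (Matrix n n ℂ))
    (Φ : n → m → ℂ) : (of (leftMul U Φ))ᴴ * of (leftMul U Φ) = (of Φ)ᴴ * of Φ := by
  rw [of_leftMul, conjTranspose_mul, Matrix.mul_assoc, ← Matrix.mul_assoc Uᴴ,
    ← star_eq_conjTranspose U, Unitary.star_mul_self_of_mem hU, Matrix.one_mul]

/-- The one-parameter group of rotations `Φ ↦ exp(tA) Φ`. -/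
noncomputable def rotationFlow (A : Matrix n n ℂ) : Flow ℝ (n → m → ℂ) where
  toFun t := leftMul (NormedSpace.exp (t • A))
  cont' := by
    have hexp : Continuous (NormedSpace.exp : Matrix n n ℂ → Matrix n n ℂ) :=
      open scoped Matrix.Norms.Operator in NormedSpace.exp_continuous
    have hsmul : Continuous fun p : ℝ × (n → m → ℂ) ↦ p.1 • A := by fun_prop
    exact (hexp.comp hsmul).matrix_mul continuous_snd
  map_add' s t Φ := by
    rw [add_smul, Matrix.exp_add_of_commute _ _ ((Commute.refl A).smul_left s |>.smul_right t),
      leftMul_mul]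
  map_zero' Φ := by rw [zero_smul, NormedSpace.exp_zero, leftMul_one]

lemma rotationFlow_apply (A : Matrix n n ℂ) (t : ℝ) (Φ : n → m → ℂ) :
    rotationFlow A t Φ = leftMul (NormedSpace.exp (t • A)) Φ := rfl

lemma exp_smul_mem_unitary {A : Matrix n n ℂ} (hA : Aᴴ = -A) (t : ℝ) :
    NormedSpace.exp (t • A) ∈ unitary (Matrix n n ℂ) := by
  have hcomm : Commute (-(t • A)) (t • A) := (Commute.refl _).neg_left
  rw [Unitary.mem_iff, star_eq_conjTranspose, ← Matrix.exp_conjTranspose, conjTranspose_smul, hA,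
    star_trivial, smul_neg, ← Matrix.exp_add_of_commute _ _ hcomm,
    ← Matrix.exp_add_of_commute _ _ hcomm.symm, neg_add_cancel, add_neg_cancel,
    NormedSpace.exp_zero, and_self]

lemma measurePreserving_leftMul [Finite m] {U : Matrix n n ℂ}
    (hU : U ∈ unitary (Matrix n n ℂ)) (μ : Measure (n → m → ℂ)) [μ.IsAddHaarMeasure] :
    MeasurePreserving (leftMul U) μ μ := by
  have := Fintype.ofFinite m
  let s : Set (n → m → ℂ) := {Φ | ((of Φ)ᴴ * of Φ).trace.re < 1}
  have hs (V) (hV : V ∈ unitary (Matrix n n ℂ)) : Set.MapsTo (leftMul V) s s := fun Φ hΦ ↦ by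
    simpa only [s, Set.mem_ofPred_eq, conjTranspose_leftMul_mul_leftMul hV] using hΦ
  have himage : leftMul U '' s = s := by
    refine (hs U hU).image_subset.antisymm fun Φ hΦ ↦
      ⟨leftMul (star U) Φ, hs _ (Unitary.star_mem hU) hΦ, ?_⟩
    rw [← leftMul_mul, Unitary.mul_star_self_of_mem hU, leftMul_one]
  have hopen : IsOpen s := by
    refine isOpen_lt ?_ continuous_const
    have : Continuous fun Φ : n → m → ℂ ↦ of Φ := continuous_id
    exact Complex.continuous_re.comp (this.matrix_conjTranspose.matrix_mul this).matrix_trace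
  have hne : s.Nonempty := ⟨0, by simp [s]⟩
  have hbdd : Bornology.IsBounded s := by
    refine Metric.isBounded_ball.subset (t := Metric.ball 0 1) fun Φ hΦ ↦ ?_
    rw [mem_ball_zero_iff, ← sq_lt_one_iff₀ (norm_nonneg _)]
    exact (norm_sq_le_sum_norm_sq Φ).trans_lt (re_trace_conjTranspose_mul_self Φ ▸ hΦ)
  exact measurePreserving_linearMap_of_image_eq himage (hopen.measure_ne_zero μ hne)
    hbdd.measure_lt_top.ne

lemma measurePreserving_rotationFlow [Finite m] {A : Matrix n n ℂ} (hA : Aᴴ = -A)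
    (μ : Measure (n → m → ℂ)) [μ.IsAddHaarMeasure] (t : ℝ) :
    MeasurePreserving (rotationFlow A t) μ μ :=
  measurePreserving_leftMul (exp_smul_mem_unitary hA t) μ

open scoped Matrix.Norms.Operator in
lemma hasDerivAt_trace_rotation {A : Matrix n n ℂ} (hA : Aᴴ = -A) (D J K Φ : Matrix n n ℂ) :
    HasDerivAt
      (fun t : ℝ ↦ (J * (NormedSpace.exp (t • A) * Φ)ᴴ).trace
        + (K * (NormedSpace.exp (t • A) * Φ)).trace
        - (D * ((NormedSpace.exp (t • A) * Φ) * (NormedSpace.exp (t • A) * Φ)ᴴ)).trace)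
      (A * (D * (Φ * Φᴴ) - Φ * Φᴴ * D + Φ * K - J * Φᴴ)).trace 0 := by
  have hX := (hasDerivAt_exp_smul_const A (0 : ℝ)).mul_const Φ
  have hXstar := (hasDerivAt_exp_smul_const Aᴴ (0 : ℝ)).const_mul Φᴴ
  let tr : Matrix n n ℂ →L[ℝ] ℂ := LinearMap.toContinuousLinearMap (traceLinearMap n ℝ ℂ)
  have h := tr.hasFDerivAt.comp_hasDerivAt 0
    (((hXstar.const_mul J).add (hX.const_mul K)).sub ((hX.mul hXstar).const_mul D))
  simp only [zero_smul, NormedSpace.exp_zero, one_mul, mul_one, hA] at h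
  have hfun (t : ℝ) : Φᴴ * NormedSpace.exp (t • -A) = (NormedSpace.exp (t • A) * Φ)ᴴ := by
    rw [conjTranspose_mul, ← Matrix.exp_conjTranspose, conjTranspose_smul, star_trivial, hA]
  have hval : (J * (Φᴴ * -A) + K * (A * Φ) - D * (A * Φ * Φᴴ + Φ * (Φᴴ * -A))).trace
      = (A * (D * (Φ * Φᴴ) - Φ * Φᴴ * D + Φ * K - J * Φᴴ)).trace := by
    simp only [Matrix.mul_sub, Matrix.mul_add, Matrix.mul_neg, trace_sub, trace_add, trace_neg]
    rw [trace_mul_comm A (D * (Φ * Φᴴ)), trace_mul_comm A (J * Φᴴ), trace_mul_comm K,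
      trace_mul_comm D (A * Φ * Φᴴ)]
    simp only [Matrix.mul_assoc]
    ring
  refine (h.congr_deriv hval).congr_of_eventuallyEq (.of_forall fun t ↦ ?_)
  simp only [← hfun, ← trace_add, ← trace_sub]
  rfl

end UnitaryRotations

section MatrixSpace

variable {n m : Type*} [Fintype n] [Fintype m]

/-- Instance search does not unfold `volume` on the nested product `n → m → ℂ`. -/
instance isAddHaarMeasure_volume_matrix : (volume : Measure (n → m → ℂ)).IsAddHaarMeasure :=
  have : (volume : Measure (m → ℂ)).IsAddHaarMeasure :=
    inferInstanceAs (Measure.pi fun _ ↦ volume).IsAddHaarMeasure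
  Measure.pi.isAddHaarMeasure fun _ ↦ volume

lemma hasTemperateGrowth_entry (i : n) (j : m) :
    (fun Φ : n → m → ℂ ↦ Φ i j).HasTemperateGrowth :=
  (ContinuousLinearMap.proj (R := ℝ) (φ := fun _ : m ↦ ℂ) j ∘L
    ContinuousLinearMap.proj (φ := fun _ : n ↦ m → ℂ) i).hasTemperateGrowth

lemma hasTemperateGrowth_conj_entry (i : n) (j : m) :
    (fun Φ : n → m → ℂ ↦ (starRingEnd ℂ) (Φ i j)).HasTemperateGrowth :=
  Complex.conjCLE.toContinuousLinearMap.hasTemperateGrowth.comp (hasTemperateGrowth_entry i j)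

end MatrixSpace

section LSZ

variable {N : ℕ} {E Et : Fin N → ℝ} {lam : ℝ}

lemma lszAction_eq (Φ : Fin N → Fin N → ℂ) :
    lszAction N E Et lam Φ = (diagonal (fun i ↦ (E i : ℂ)) * (of Φ * (of Φ)ᴴ)).trace
      + (diagonal (fun i ↦ (Et i : ℂ)) * ((of Φ)ᴴ * of Φ)).trace
      + (lam / 2 : ℝ) * (((of Φ)ᴴ * of Φ) * ((of Φ)ᴴ * of Φ)).trace := by
  rw [lszAction]
  congr 1
  simp only [trace, diag_apply, diagonal_mul]
  simp only [Matrix.mul_apply, of_apply, conjTranspose_apply, Finset.mul_sum, Complex.ofReal_add,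
    add_mul, Finset.sum_add_distrib, Complex.normSq_eq_conj_mul_self, starRingEnd_apply]
  rw [Finset.sum_comm (f := fun i j ↦ (Et j : ℂ) * _)]
  simp only [mul_comm (star _)]

/-- The real-linear functional `Φ ↦ Tr(J Φᴴ) + Tr(K Φ)` to which the sources `J`, `K` couple. -/
noncomputable def sourceForm (J K : Fin N → Fin N → ℂ) : (Fin N → Fin N → ℂ) →L[ℝ] ℂ :=
  LinearMap.toContinuousLinearMap
    { toFun Φ := (of J * (of Φ)ᴴ).trace + (of K * of Φ).trace
      map_add' Φ Ψ := by
        simp only [← of_add_of, conjTranspose_add, Matrix.mul_add, trace_add]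
        ring
      map_smul' c Φ := by
        simp only [← smul_of, conjTranspose_smul, star_trivial, Matrix.mul_smul, trace_smul,
          smul_add, RingHom.id_apply] }

lemma sourceForm_apply (J K Φ : Fin N → Fin N → ℂ) :
    sourceForm J K Φ = (of J * (of Φ)ᴴ).trace + (of K * of Φ).trace := rfl

lemma sourceForm_add_smul (J K J' K' : Fin N → Fin N → ℂ) (t : ℂ) (Φ : Fin N → Fin N → ℂ) :
    sourceForm (J + t • J') (K + t • K') Φ = sourceForm J K Φ + t * sourceForm J' K' Φ := by
  simp only [sourceForm_apply, ← of_add_of, ← smul_of, Matrix.add_mul, Matrix.smul_mul, trace_add,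
    trace_smul, smul_eq_mul]
  ring

lemma of_eMat (a b : Fin N) : of (eMat N a b) = single a b 1 := by
  ext i j
  simp [eMat, single_apply, eq_comm]

lemma sourceForm_eMat_zero (a b : Fin N) (Φ : Fin N → Fin N → ℂ) :
    sourceForm (eMat N a b) 0 Φ = (starRingEnd ℂ) (Φ a b) := by
  simp [sourceForm_apply, of_eMat, trace_single_mul]

lemma sourceForm_zero_eMat (a b : Fin N) (Φ : Fin N → Fin N → ℂ) :
    sourceForm 0 (eMat N a b) Φ = Φ b a := by
  simp [sourceForm_apply, of_eMat, trace_single_mul]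

lemma lszIntegrand_eq (J K Φ : Fin N → Fin N → ℂ) :
    lszIntegrand N E Et lam J K Φ
      = Complex.exp (N * sourceForm J K Φ) * Complex.exp (-N * lszAction N E Et lam Φ) := by
  rw [lszIntegrand, ← Complex.exp_add, sourceForm_apply]
  congr 1
  simp only [trace, diag_apply, Matrix.mul_apply, of_apply, conjTranspose_apply]
  rw [Finset.sum_comm (f := fun m n ↦ J n m * _)]
  simp only [starRingEnd_apply]
  ring

lemma lszIntegrand_add_smul (J K J' K' Φ : Fin N → Fin N → ℂ) (t : ℂ) :
    lszIntegrand N E Et lam (J + t • J') (K + t • K') Φ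
      = lszIntegrand N E Et lam J K Φ * Complex.exp (t * ((N : ℝ) • sourceForm J' K') Φ) := by
  rw [lszIntegrand_eq, lszIntegrand_eq, mul_right_comm, sourceForm_add_smul,
    ← Complex.exp_add (N * sourceForm J K Φ), _root_.smul_apply,
    Complex.real_smul, Complex.ofReal_natCast]
  congr 2
  ring

lemma continuous_lszAction : Continuous (lszAction N E Et lam) := by
  have : Continuous fun Φ : Fin N → Fin N → ℂ ↦ of Φ := continuous_id
  simp only [funext lszAction_eq]
  fun_prop

lemma continuous_lszIntegrand (J K : Fin N → Fin N → ℂ) :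
    Continuous (lszIntegrand N E Et lam J K) := by
  have := continuous_lszAction (E := E) (Et := Et) (lam := lam)
  simp only [funext (lszIntegrand_eq J K)]
  fun_prop

lemma sum_mul_norm_sq_le_re_lszAction (hlam : 0 ≤ lam) (Φ : Fin N → Fin N → ℂ) :
    ∑ n, ∑ m, (E n + Et m) * ‖Φ n m‖ ^ 2 ≤ (lszAction N E Et lam Φ).re := by
  open scoped ComplexOrder in
  have hquartic : 0 ≤ ((((of Φ)ᴴ * of Φ) * ((of Φ)ᴴ * of Φ)).trace).re := by
    have h := (posSemidef_conjTranspose_mul_self ((of Φ)ᴴ * of Φ)).trace_nonneg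
    rw [conjTranspose_mul, conjTranspose_conjTranspose] at h
    exact (Complex.le_def.1 h).1
  rw [lszAction, Complex.add_re, Complex.re_ofReal_mul]
  refine le_add_of_le_of_nonneg (le_of_eq ?_) (by positivity)
  simp only [Complex.re_sum, Complex.re_ofReal_mul, Complex.ofReal_re, Complex.normSq_eq_norm_sq]

lemma hasGaussianDecay_lszIntegrand (hpos : ∀ n m, 0 < E n + Et m) (hlam : 0 ≤ lam)
    (J K : Fin N → Fin N → ℂ) : HasGaussianDecay (lszIntegrand N E Et lam J K) := by
  have hpos' (p : Fin N × Fin N) : 0 < N * (E p.1 + Et p.2) :=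
    mul_pos (Nat.cast_pos.2 p.1.pos) (hpos p.1 p.2)
  obtain ⟨c, hc, hcE⟩ := Pi.exists_forall_pos_add_lt hpos'
  have haction : HasGaussianDecay fun Φ ↦ Complex.exp (-N * lszAction N E Et lam Φ) := by
    refine ⟨c, hc, .of_bound 1 (.of_forall fun Φ ↦ ?_)⟩
    rw [Complex.norm_exp, Real.norm_of_nonneg (Real.exp_nonneg _), one_mul, Real.exp_le_exp]
    calc (-N * lszAction N E Et lam Φ).re = -(N * (lszAction N E Et lam Φ).re) := by simp
      _ ≤ -(N * ∑ n, ∑ m, (E n + Et m) * ‖Φ n m‖ ^ 2) := by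
        gcongr
        exact sum_mul_norm_sq_le_re_lszAction hlam Φ
      _ = -∑ n, ∑ m, (N * (E n + Et m)) * ‖Φ n m‖ ^ 2 := by
        simp only [Finset.mul_sum, mul_assoc]
      _ ≤ -∑ n, ∑ m, c * ‖Φ n m‖ ^ 2 := by
        gcongr with n _ m _
        simpa using (hcE (n, m)).le
      _ ≤ -c * ‖Φ‖ ^ 2 := by
        simp only [← Finset.mul_sum, neg_mul, neg_le_neg_iff]
        gcongr
        exact norm_sq_le_sum_norm_sq Φ
  have hsource := isBigO_cexp_continuousLinearMap ((N : ℝ) • sourceForm J K)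
  have h := haction.mul_of_isBigO_exp hsource
  simpa only [_root_.smul_apply, Complex.real_smul, Complex.ofReal_natCast,
    ← lszIntegrand_eq] using h

/-- The unnormalised expectation of the observable `f` in the presence of the sources `J`, `K`. -/
noncomputable def lszMoment (E Et : Fin N → ℝ) (lam : ℝ) (f : (Fin N → Fin N → ℂ) → ℂ)
    (J K : Fin N → Fin N → ℂ) : ℂ :=
  ∫ Φ, f Φ * lszIntegrand N E Et lam J K Φ

lemma integrable_mul_lszIntegrand (hpos : ∀ n m, 0 < E n + Et m) (hlam : 0 ≤ lam)
    {f : (Fin N → Fin N → ℂ) → ℂ} (hf : f.HasTemperateGrowth) (J K : Fin N → Fin N → ℂ) :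
    Integrable fun Φ ↦ f Φ * lszIntegrand N E Et lam J K Φ :=
  ((hasGaussianDecay_lszIntegrand hpos hlam J K).mul_of_hasTemperateGrowth hf).integrable
    (hf.1.continuous.mul (continuous_lszIntegrand J K)).aestronglyMeasurable

lemma lszZ_eq_lszMoment : lszZ N E Et lam = lszMoment E Et lam fun _ ↦ 1 := by
  funext J K
  simp only [lszZ, lszMoment, one_mul]

lemma lszMoment_const_mul (c : ℂ) (f : (Fin N → Fin N → ℂ) → ℂ) (J K : Fin N → Fin N → ℂ) :
    lszMoment E Et lam (fun Φ ↦ c * f Φ) J K = c * lszMoment E Et lam f J K := by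
  simp only [lszMoment, mul_assoc, integral_const_mul]

lemma hasDerivAt_lszMoment (hpos : ∀ n m, 0 < E n + Et m) (hlam : 0 ≤ lam)
    {f : (Fin N → Fin N → ℂ) → ℂ} (hf : f.HasTemperateGrowth) (J K J' K' : Fin N → Fin N → ℂ) :
    HasDerivAt (fun t : ℂ ↦ lszMoment E Et lam f (J + t • J') (K + t • K'))
      (lszMoment E Et lam (fun Φ ↦ N * sourceForm J' K' Φ * f Φ) J K) 0 := by
  have h := ((hasGaussianDecay_lszIntegrand hpos hlam J K).mul_of_hasTemperateGrowth
    hf).hasDerivAt_integral_mul_cexp (μ := volume)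
    (hf.1.continuous.mul (continuous_lszIntegrand J K)).aestronglyMeasurable
    ((N : ℝ) • sourceForm J' K')
  simpa only [lszMoment, lszIntegrand_add_smul, mul_assoc, _root_.smul_apply, Complex.real_smul,
    Complex.ofReal_natCast] using h

lemma dJ_lszMoment (hpos : ∀ n m, 0 < E n + Et m) (hlam : 0 ≤ lam)
    {f : (Fin N → Fin N → ℂ) → ℂ} (hf : f.HasTemperateGrowth) (a b : Fin N) :
    dJ N a b (lszMoment E Et lam f)
      = lszMoment E Et lam fun Φ ↦ N * (starRingEnd ℂ) (Φ a b) * f Φ := by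
  funext J K
  have h := hasDerivAt_lszMoment hpos hlam hf J K (eMat N a b) 0
  simpa only [smul_zero, add_zero, sourceForm_eMat_zero] using! h.deriv

lemma dK_lszMoment (hpos : ∀ n m, 0 < E n + Et m) (hlam : 0 ≤ lam)
    {f : (Fin N → Fin N → ℂ) → ℂ} (hf : f.HasTemperateGrowth) (a b : Fin N) :
    dK N a b (lszMoment E Et lam f) = lszMoment E Et lam fun Φ ↦ N * Φ b a * f Φ := by
  funext J K
  have h := hasDerivAt_lszMoment hpos hlam hf J K 0 (eMat N a b)
  simpa only [smul_zero, add_zero, sourceForm_zero_eMat] using! h.deriv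

/-- The matrix `M` for which `N * Tr(A M)` is the logarithmic derivative of the LSZ integrand along
the rotations `Φ ↦ exp(tA) Φ`; the expectations of its entries are the Ward identities. -/
noncomputable def wardCurrent (E : Fin N → ℝ) (J K Φ : Fin N → Fin N → ℂ) :
    Matrix (Fin N) (Fin N) ℂ :=
  diagonal (fun i ↦ (E i : ℂ)) * (of Φ * (of Φ)ᴴ) - of Φ * (of Φ)ᴴ * diagonal (fun i ↦ (E i : ℂ))
    + of Φ * of K - of J * (of Φ)ᴴ

lemma wardCurrent_apply (J K Φ : Fin N → Fin N → ℂ) (k l : Fin N) :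
    wardCurrent E J K Φ k l = ∑ n, (((E k - E l : ℝ) : ℂ) * ((starRingEnd ℂ) (Φ l n) * Φ k n)
      + K n l * Φ k n - J k n * (starRingEnd ℂ) (Φ l n)) := by
  simp only [wardCurrent, Matrix.sub_apply, Matrix.add_apply, diagonal_mul, mul_diagonal]
  simp only [Matrix.mul_apply, of_apply, conjTranspose_apply, starRingEnd_apply, Finset.mul_sum,
    Finset.sum_mul, ← Finset.sum_sub_distrib, ← Finset.sum_add_distrib]
  refine Finset.sum_congr rfl fun n _ ↦ ?_
  push_cast
  ring

lemma hasTemperateGrowth_wardCurrent_apply (J K : Fin N → Fin N → ℂ) (k l : Fin N) :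
    (fun Φ ↦ wardCurrent E J K Φ k l).HasTemperateGrowth := by
  have hΦ (i j : Fin N) := hasTemperateGrowth_entry i j
  have hconj (i j : Fin N) := hasTemperateGrowth_conj_entry i j
  simp only [wardCurrent_apply]
  exact .sum fun n _ ↦ (((Function.HasTemperateGrowth.const _).mul ((hconj l n).mul (hΦ k n))).add
    ((Function.HasTemperateGrowth.const _).mul (hΦ k n))).sub
    ((Function.HasTemperateGrowth.const _).mul (hconj l n))

lemma hasDerivAt_lszIntegrand_rotationFlow {A : Matrix (Fin N) (Fin N) ℂ} (hA : Aᴴ = -A)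
    (J K Φ : Fin N → Fin N → ℂ) :
    HasDerivAt (fun t : ℝ ↦ lszIntegrand N E Et lam J K (rotationFlow A t Φ))
      (N * ((A * wardCurrent E J K Φ).trace * lszIntegrand N E Et lam J K Φ)) 0 := by
  let D : Matrix (Fin N) (Fin N) ℂ := diagonal fun i ↦ (E i : ℂ)
  let c : ℂ := (diagonal (fun i ↦ (Et i : ℂ)) * ((of Φ)ᴴ * of Φ)).trace
    + (lam / 2 : ℝ) * (((of Φ)ᴴ * of Φ) * ((of Φ)ᴴ * of Φ)).trace
  have hexponent (t : ℝ) : lszIntegrand N E Et lam J K (rotationFlow A t Φ)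
      = Complex.exp (N * ((of J * (NormedSpace.exp (t • A) * of Φ)ᴴ).trace
        + (of K * (NormedSpace.exp (t • A) * of Φ)).trace
        - (D * ((NormedSpace.exp (t • A) * of Φ) * (NormedSpace.exp (t • A) * of Φ)ᴴ)).trace
        - c)) := by
    rw [lszIntegrand_eq, ← Complex.exp_add, sourceForm_apply, lszAction_eq, rotationFlow_apply,
      conjTranspose_leftMul_mul_leftMul (exp_smul_mem_unitary hA t), of_leftMul]
    congr 1
    ring
  have h := (((hasDerivAt_trace_rotation hA D (of J) (of K) (of Φ)).sub_const c).const_mul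
    (N : ℂ)).cexp
  simp only [← hexponent] at h
  rw [(rotationFlow A).map_zero_apply] at h
  exact h.congr_deriv (by rw [wardCurrent]; ring)

lemma integral_trace_mul_wardCurrent_eq_zero_of_skew (hpos : ∀ n m, 0 < E n + Et m) (hlam : 0 ≤ lam)
    (J K : Fin N → Fin N → ℂ) {A : Matrix (Fin N) (Fin N) ℂ} (hA : Aᴴ = -A) :
    ∫ Φ, N * ((A * wardCurrent E J K Φ).trace * lszIntegrand N E Et lam J K Φ) = 0 := by
  have htrace : (fun Φ ↦ (A * wardCurrent E J K Φ).trace).HasTemperateGrowth := by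
    have := hasTemperateGrowth_wardCurrent_apply (E := E) J K
    simp only [trace, diag_apply, Matrix.mul_apply]
    fun_prop
  exact integral_eq_zero_of_hasDerivAt_flow (rotationFlow A)
    (measurePreserving_rotationFlow hA volume)
    (by simpa using integrable_mul_lszIntegrand hpos hlam (f := fun _ ↦ 1) (by fun_prop) J K)
    ((integrable_mul_lszIntegrand hpos hlam htrace J K).const_mul _)
    fun Φ ↦ hasDerivAt_lszIntegrand_rotationFlow hA J K Φ

lemma lszMoment_wardCurrent_eq_zero (hpos : ∀ n m, 0 < E n + Et m) (hlam : 0 ≤ lam)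
    (J K : Fin N → Fin N → ℂ) (k l : Fin N) :
    lszMoment E Et lam (fun Φ ↦ wardCurrent E J K Φ k l) J K = 0 := by
  let M : Matrix (Fin N) (Fin N) ℂ :=
    of fun i j ↦ lszMoment E Et lam (fun Φ ↦ wardCurrent E J K Φ i j) J K
  suffices M = 0 from congr_fun₂ this k l
  refine eq_zero_of_trace_mul_skew_eq_zero fun A hA ↦ ?_
  have hint (i j : Fin N) :=
    integrable_mul_lszIntegrand hpos hlam (hasTemperateGrowth_wardCurrent_apply (E := E) J K i j)
      J K
  have htrace : (A * M).trace
      = ∫ Φ, (A * wardCurrent E J K Φ).trace * lszIntegrand N E Et lam J K Φ := by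
    simp only [M, trace, diag_apply, Matrix.mul_apply, of_apply, lszMoment, Finset.sum_mul,
      mul_assoc, ← integral_const_mul]
    rw [integral_finsetSum _ fun i _ ↦
      integrable_finsetSum _ fun j _ ↦ (hint j i).const_mul (A i j)]
    exact Finset.sum_congr rfl fun i _ ↦
      (integral_finsetSum _ fun j _ ↦ (hint j i).const_mul (A i j)).symm
  have hN : (N : ℂ) ≠ 0 := Nat.cast_ne_zero.2 k.pos.ne'
  have h := integral_trace_mul_wardCurrent_eq_zero_of_skew hpos hlam J K hA
  rw [integral_const_mul, mul_eq_zero] at h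
  exact htrace.trans (h.resolve_left hN)

lemma lszMoment_wardCurrent_apply (hpos : ∀ n m, 0 < E n + Et m) (hlam : 0 ≤ lam)
    (J K : Fin N → Fin N → ℂ) (k l : Fin N) :
    lszMoment E Et lam (fun Φ ↦ wardCurrent E J K Φ k l) J K
      = ∑ n, (((E k - E l : ℝ) : ℂ)
          * lszMoment E Et lam (fun Φ ↦ (starRingEnd ℂ) (Φ l n) * Φ k n) J K
        + K n l * lszMoment E Et lam (fun Φ ↦ Φ k n) J K
        - J k n * lszMoment E Et lam (fun Φ ↦ (starRingEnd ℂ) (Φ l n)) J K) := by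
  have hΦ (n : Fin N) := hasTemperateGrowth_entry k n
  have hconj (n : Fin N) := hasTemperateGrowth_conj_entry l n
  have hconjΦ_int (n : Fin N) (c : ℂ) : Integrable fun Φ : Fin N → Fin N → ℂ ↦
      c * ((starRingEnd ℂ) (Φ l n) * Φ k n * lszIntegrand N E Et lam J K Φ) :=
    (integrable_mul_lszIntegrand hpos hlam ((hconj n).mul (hΦ n)) J K).const_mul c
  have hΦ_int (n : Fin N) (c : ℂ) :=
    (integrable_mul_lszIntegrand hpos hlam (hΦ n) J K).const_mul c
  have hconj_int (n : Fin N) (c : ℂ) :=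
    (integrable_mul_lszIntegrand hpos hlam (hconj n) J K).const_mul c
  simp only [wardCurrent_apply, lszMoment, ← integral_const_mul, Finset.sum_mul]
  rw [integral_finsetSum]
  · refine Finset.sum_congr rfl fun n _ ↦ ?_
    rw [← integral_add (hconjΦ_int n _) (hΦ_int n _)]
    refine .trans ?_ (integral_sub ((hconjΦ_int n _).add (hΦ_int n _)) (hconj_int n _))
    exact congr_arg _ (funext fun Φ ↦ by ring)
  · refine fun n _ ↦ (((hconjΦ_int n (E k - E l : ℝ)).add (hΦ_int n (K n l))).sub
      (hconj_int n (J k n))).congr (.of_forall fun Φ ↦ ?_)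
    simp only [Pi.add_apply, Pi.sub_apply]
    ring

end LSZ

theorem lsz_ward_identity_general (N : ℕ) (E Et : Fin N → ℝ) (hpos : ∀ n m, 0 < E n + Et m)
    (lam : ℝ) (hlam : 0 ≤ lam) (k l : Fin N) (J K : Fin N → Fin N → ℂ) :
    ∑ n, (((E k - E l : ℝ) : ℂ) * dJ N l n (dK N n k (lszZ N E Et lam)) J K
      + (N : ℂ) * K n l * dK N n k (lszZ N E Et lam) J K
      - (N : ℂ) * J k n * dJ N l n (lszZ N E Et lam) J K) = 0 := by
  have hdJ (n : Fin N) := dJ_lszMoment hpos hlam (.const 1) l n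
  have hdK (n : Fin N) := dK_lszMoment hpos hlam (.const 1) n k
  have hdJdK (n : Fin N) := dJ_lszMoment hpos hlam (f := fun Φ ↦ N * Φ k n)
    (.mul (.const _) (hasTemperateGrowth_entry k n)) l n
  have hcurrent := lszMoment_wardCurrent_eq_zero hpos hlam J K k l
  rw [lszMoment_wardCurrent_apply hpos hlam] at hcurrent
  simp only [lszZ_eq_lszMoment, hdJ, hdK, mul_one, hdJdK, mul_left_comm _ (N : ℂ), mul_assoc,
    lszMoment_const_mul]
  rw [← mul_zero ((N : ℂ) * N), ← hcurrent, Finset.mul_sum]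
  exact Finset.sum_congr rfl fun n _ ↦ by ring

/-- The Ward identity of the LSZ model:
`Σ_n [(E_k − E_l)·∂²Z/∂J_{ln}∂K_{nk} + N·K_{nl}·∂Z/∂K_{nk} − N·J_{kn}·∂Z/∂J_{ln}] = 0`. -/
theorem lsz_ward_identity
    (N : ℕ) (hN : 1 ≤ N) (E Et : Fin N → ℝ)
    (hE : ∀ n, 0 < E n) (hEt : ∀ n, 0 < Et n) (lam : ℝ) (hlam : 0 ≤ lam)
    (k l : Fin N) (J K : Fin N → Fin N → ℂ) :
    ∑ n, ((((E k - E l : ℝ)) : ℂ) * dJ N l n (dK N n k (lszZ N E Et lam)) J K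
      + (N : ℂ) * K n l * dK N n k (lszZ N E Et lam) J K
      - (N : ℂ) * J k n * dJ N l n (lszZ N E Et lam) J K) = 0 :=
  lsz_ward_identity_general N E Et (fun n m ↦ add_pos (hE n) (hEt m)) lam hlam k l J K
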